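/- Let d ≥ 1, M ≥ 1, r > 0, and let {e_j}_{j=1}^d be the standard basis of ℝ^d. Define W : ℝ×ℝ^d → ℝ by W(t,x) := Σ_{j=1}^d [ e^{−√M(x·e_j + r·d^{−1/2} − 2√M·t)} + e^{−√M(−x·e_j + r·d^{−1/2} − 2√M·t)} ]. Then: (a) W is smooth and satisfies ∂_t W = ΔW + M·W at every (t,x) ∈ ℝ×ℝ^d; (b) W(0,x) ≥ 1 whenever |x| ≥ r; and (c) with m' := √(M/d) and c' := 2√M·d, W(t,0) ≤ c'·e^{−m'(r−c't)} for all t ≥ 0. -/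

import Mathlib

open MeasureTheory Metric Set Filter
open scoped Topology

noncomputable section

/-- `d`-dimensional Euclidean space. -/
abbrev Euc (d : ℕ) : Type := EuclideanSpace ℝ (Fin d)

/-- The spatial Laplacian of `φ : ℝ^d → ℝ`. -/
def lap {d : ℕ} (φ : Euc d → ℝ) (x : Euc d) : ℝ :=
  ∑ i : Fin d,
    fderiv ℝ (fun y => fderiv ℝ φ y (EuclideanSpace.single i 1)) x (EuclideanSpace.single i 1)

/-- The explicit supersolution
`W(t,x) = Σ_j [exp(−√M(x_j + r/√d − 2√M t)) + exp(−√M(−x_j + r/√d − 2√M t))]`. -/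
def Wfun (d : ℕ) (M r : ℝ) (t : ℝ) (x : Euc d) : ℝ :=
  ∑ j : Fin d,
    (Real.exp (-(Real.sqrt M * (x j + r / Real.sqrt d - 2 * Real.sqrt M * t))) +
      Real.exp (-(Real.sqrt M * (-(x j) + r / Real.sqrt d - 2 * Real.sqrt M * t))))

/-!
The function `exp (⟪v, x⟫ + (‖v‖² + M) t + b)` solves `w_t = Δw + M w`, because `Δ` multiplies it
by `‖v‖²`. Choosing `v = ±√M e_j` makes the time frequency `2M`, so `W` is a sum of `2d` such
solutions travelling at speed `2√M`. If `|x| ≥ r`, some coordinate has `|x_j| ≥ r / √d`, and one of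
the two waves along `e_j` is already at least `1` at time `0`. At the origin all `2d` waves agree,
so `W` has a closed form there.
-/

section Laplacian

variable {d : ℕ}

lemma lap_zero (x : Euc d) : lap 0 x = 0 := by
  simp [lap]

lemma lap_add {φ ψ : Euc d → ℝ} (hφ : ContDiff ℝ 2 φ) (hψ : ContDiff ℝ 2 ψ) (x : Euc d) :
    lap (φ + ψ) x = lap φ x + lap ψ x := by
  have differentiable_partial {f : Euc d → ℝ} (hf : ContDiff ℝ 2 f) (u : Euc d) :
      Differentiable ℝ fun y => fderiv ℝ f y u :=
    ((hf.fderiv_right (m := 1) le_rfl).clm_apply contDiff_const).differentiable one_ne_zero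
  have fderiv_add_apply (u y : Euc d) :
      fderiv ℝ (φ + ψ) y u = fderiv ℝ φ y u + fderiv ℝ ψ y u := by
    rw [fderiv_add (hφ.differentiable two_ne_zero y) (hψ.differentiable two_ne_zero y)]
    rfl
  simp only [lap, ← Finset.sum_add_distrib, fderiv_add_apply]
  refine Finset.sum_congr rfl fun i _ => ?_
  rw [fderiv_fun_add (differentiable_partial hφ _ x) (differentiable_partial hψ _ x)]
  rfl

lemma fderiv_mul_exp_inner_add {E : Type*} [NormedAddCommGroup E] [InnerProductSpace ℝ E]
    (a b : ℝ) (v x u : E) :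
    fderiv ℝ (fun y => a * Real.exp (inner ℝ v y + b)) x u =
      inner ℝ v u * a * Real.exp (inner ℝ v x + b) := by
  have h : HasFDerivAt (fun y => a * Real.exp (inner ℝ v y + b)) _ x :=
    (((innerSL ℝ v).hasFDerivAt.add_const b).exp).const_mul a
  rw [h.fderiv]
  simp only [smul_apply, innerSL_apply_apply, smul_eq_mul]
  ring

lemma lap_exp_inner_add (b : ℝ) (v x : Euc d) :
    lap (fun y => Real.exp (inner ℝ v y + b)) x = ‖v‖ ^ 2 * Real.exp (inner ℝ v x + b) := by
  have fderiv_exp (y u : Euc d) : fderiv ℝ (fun y => Real.exp (inner ℝ v y + b)) y u =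
      inner ℝ v u * Real.exp (inner ℝ v y + b) := by
    simpa using fderiv_mul_exp_inner_add 1 b v y u
  simp only [lap, fderiv_exp, fderiv_mul_exp_inner_add, ← Finset.sum_mul,
    EuclideanSpace.real_norm_sq_eq, EuclideanSpace.inner_single_right]
  simp [sq]

end Laplacian

/-- Smooth classical solutions `w` on `ℝ × ℝ^d` of the linearized equation `w_t = Δw + M w`. -/
structure IsSmoothSolution {d : ℕ} (M : ℝ) (w : ℝ → Euc d → ℝ) : Prop where
  contDiff : ContDiff ℝ (⊤ : ℕ∞) fun p : ℝ × Euc d => w p.1 p.2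
  hasDerivAt (t : ℝ) (x : Euc d) :
    HasDerivAt (fun s => w s x) (lap (w t) x + M * w t x) t

namespace IsSmoothSolution

variable {d : ℕ} {M : ℝ} {w z : ℝ → Euc d → ℝ}

lemma contDiff_apply (hw : IsSmoothSolution M w) (t : ℝ) : ContDiff ℝ (⊤ : ℕ∞) (w t) :=
  hw.contDiff.comp (contDiff_prodMk_right t)

lemma zero : IsSmoothSolution M (0 : ℝ → Euc d → ℝ) where
  contDiff := contDiff_const
  hasDerivAt t x := by
    simpa [lap_zero] using hasDerivAt_const t (0 : ℝ)

lemma add (hw : IsSmoothSolution M w) (hz : IsSmoothSolution M z) :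
    IsSmoothSolution M (w + z) where
  contDiff := hw.contDiff.add hz.contDiff
  hasDerivAt t x := by
    have two_le_infty : (2 : WithTop ℕ∞) ≤ (⊤ : ℕ∞) := WithTop.coe_le_coe.mpr le_top
    have lap_eq : lap ((w + z) t) x = lap (w t) x + lap (z t) x :=
      lap_add ((hw.contDiff_apply t).of_le two_le_infty)
        ((hz.contDiff_apply t).of_le two_le_infty) x
    refine ((hw.hasDerivAt t x).add (hz.hasDerivAt t x)).congr_deriv ?_
    rw [lap_eq, Pi.add_apply, Pi.add_apply]
    ring

lemma sum {ι : Type*} {s : Finset ι} {f : ι → ℝ → Euc d → ℝ}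
    (hf : ∀ i ∈ s, IsSmoothSolution M (f i)) : IsSmoothSolution M (∑ i ∈ s, f i) :=
  Finset.sum_induction f (IsSmoothSolution M) (fun _ _ => add) zero hf

end IsSmoothSolution

/-- The exponential wave with spatial frequency `v` and phase `b`, whose time frequency `‖v‖² + M`
is dictated by the dispersion relation of `w_t = Δw + M w`. -/
def expWave {d : ℕ} (M b : ℝ) (v : Euc d) (t : ℝ) (x : Euc d) : ℝ :=
  Real.exp (inner ℝ v x + ((‖v‖ ^ 2 + M) * t + b))

lemma isSmoothSolution_expWave {d : ℕ} (M b : ℝ) (v : Euc d) :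
    IsSmoothSolution M (expWave M b v) where
  contDiff := by
    have contDiff_inner : ContDiff ℝ (⊤ : ℕ∞) fun p : ℝ × Euc d => inner ℝ v p.2 :=
      contDiff_const.inner ℝ contDiff_snd
    unfold expWave
    fun_prop
  hasDerivAt t x := by
    have lap_eq : lap (expWave M b v t) x = ‖v‖ ^ 2 * expWave M b v t x :=
      lap_exp_inner_add _ v x
    have deriv_time : HasDerivAt (fun s => expWave M b v s x) _ t :=
      ((((hasDerivAt_id t).const_mul (‖v‖ ^ 2 + M)).add_const b).const_add (inner ℝ v x)).exp
    refine deriv_time.congr_deriv ?_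
    rw [lap_eq, expWave, id]
    ring

lemma exists_norm_div_sqrt_card_le_norm {𝕜 ι : Type*} [RCLike 𝕜] [Fintype ι] [Nonempty ι]
    (x : EuclideanSpace 𝕜 ι) : ∃ i, ‖x‖ / √(Fintype.card ι) ≤ ‖x i‖ := by
  have sum_le : ∑ _i : ι, (‖x‖ / √(Fintype.card ι)) ^ 2 ≤ ∑ i, ‖x i‖ ^ 2 := by
    rw [← EuclideanSpace.norm_sq_eq, Finset.sum_const, Finset.card_univ, nsmul_eq_mul, div_pow,
      Real.sq_sqrt (Nat.cast_nonneg _), mul_div_cancel₀ _ (by simp)]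
  obtain ⟨i, -, hi⟩ := Finset.exists_le_of_sum_le Finset.univ_nonempty sum_le
  exact ⟨i, le_of_sq_le_sq hi (norm_nonneg _)⟩

section Supersolution

variable {d : ℕ} {M : ℝ}

lemma Wfun_eq_sum_expWave (hM : 0 ≤ M) (r : ℝ) :
    Wfun d M r = ∑ j : Fin d,
      (expWave M (-(√M * (r / √d))) (EuclideanSpace.single j (-√M)) +
        expWave M (-(√M * (r / √d))) (EuclideanSpace.single j √M)) := by
  ext t x
  simp only [Wfun, expWave, Finset.sum_apply, Pi.add_apply, EuclideanSpace.inner_single_left,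
    PiLp.norm_single, norm_neg, Real.norm_eq_abs, sq_abs, Real.sq_sqrt hM, conj_trivial]
  have phase (a : ℝ) : -(√M * (a + r / √d - 2 * √M * t)) =
      -√M * a + ((M + M) * t + -(√M * (r / √d))) := by
    linear_combination 2 * t * Real.sq_sqrt hM
  simp only [phase, neg_mul_neg]

lemma isSmoothSolution_Wfun (hM : 0 ≤ M) (r : ℝ) : IsSmoothSolution M (Wfun d M r) := by
  rw [Wfun_eq_sum_expWave hM]
  exact .sum fun j _ => (isSmoothSolution_expWave M _ _).add (isSmoothSolution_expWave M _ _)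

lemma exp_le_Wfun (M r t : ℝ) (x : Euc d) (j : Fin d) :
    Real.exp (√M * (|x j| - r / √d + 2 * √M * t)) ≤ Wfun d M r t x := by
  refine le_trans ?_ (Finset.single_le_sum (fun i _ => by positivity) (Finset.mem_univ j))
  rcases abs_cases (x j) with ⟨h_abs, -⟩ | ⟨h_abs, -⟩
  · exact le_add_of_nonneg_of_le (Real.exp_nonneg _) (le_of_eq (by rw [h_abs]; ring_nf))
  · exact le_add_of_le_of_nonneg (le_of_eq (by rw [h_abs]; ring_nf)) (Real.exp_nonneg _)

lemma one_le_Wfun_zero [NeZero d] (M : ℝ) {r : ℝ} {x : Euc d} (hx : r ≤ ‖x‖) :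
    1 ≤ Wfun d M r 0 x := by
  obtain ⟨j, hj⟩ := exists_norm_div_sqrt_card_le_norm x
  have coord_ge : r / √d ≤ |x j| := by
    rw [Fintype.card_fin] at hj
    exact le_trans (by gcongr) hj
  refine le_trans (Real.one_le_exp ?_) (exp_le_Wfun M r 0 x j)
  simpa using mul_nonneg (Real.sqrt_nonneg M) (sub_nonneg.mpr coord_ge)

lemma Wfun_apply_origin [NeZero d] (M r t : ℝ) :
    Wfun d M r t 0 = 2 * d * Real.exp (-(√(M / d) * (r - 2 * √M * √d * t))) := by
  have exponent_eq : √(M / d) * (r - 2 * √M * √d * t) = √M * (r / √d - 2 * √M * t) := by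
    have sqrt_ne_zero : √(d : ℝ) ≠ 0 := by simp [NeZero.ne d]
    rw [Real.sqrt_div' M (Nat.cast_nonneg d)]
    field_simp
  simp only [exponent_eq, Wfun, PiLp.zero_apply, neg_zero, zero_add, Finset.sum_const,
    Finset.card_univ, Fintype.card_fin, nsmul_eq_mul]
  ring

lemma Wfun_apply_origin_le [NeZero d] (hM : 1 ≤ M) (r : ℝ) {t : ℝ} (ht : 0 ≤ t) :
    Wfun d M r t 0 ≤ 2 * √M * d * Real.exp (-(√(M / d) * (r - 2 * √M * d * t))) := by
  have one_le_sqrt : 1 ≤ √M := Real.one_le_sqrt.mpr hM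
  have sqrt_le_self : √(d : ℝ) ≤ d :=
    Real.sqrt_le_self_iff.mpr (.inr (mod_cast NeZero.one_le))
  rw [Wfun_apply_origin]
  gcongr
  linarith

end Supersolution

/-- the explicit function `W` is smooth, solves `W_t = ΔW + M·W`, dominates `1`
at time `0` outside `B_r(0)`, and satisfies the exponential bound at the origin. -/
theorem stmt10 {d : ℕ} (hd1 : 1 ≤ d) (M r : ℝ) (hM : 1 ≤ M) (hr : 0 < r) :
    (ContDiff ℝ (⊤ : ℕ∞) fun p : ℝ × Euc d => Wfun d M r p.1 p.2) ∧
    (∀ (t : ℝ) (x : Euc d),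
      HasDerivAt (fun s => Wfun d M r s x) (lap (Wfun d M r t) x + M * Wfun d M r t x) t) ∧
    (∀ x : Euc d, r ≤ ‖x‖ → 1 ≤ Wfun d M r 0 x) ∧
    (∀ t : ℝ, 0 ≤ t →
      Wfun d M r t 0 ≤ (2 * Real.sqrt M * d) *
        Real.exp (-(Real.sqrt (M / d) * (r - (2 * Real.sqrt M * d) * t)))) := by
  have : NeZero d := ⟨Nat.one_le_iff_ne_zero.mp hd1⟩
  have solution : IsSmoothSolution M (Wfun d M r) :=
    isSmoothSolution_Wfun (zero_le_one.trans hM) r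
  exact ⟨solution.contDiff, solution.hasDerivAt, fun _ hx => one_le_Wfun_zero M hx,
    fun _ ht => Wfun_apply_origin_le hM r ht⟩
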